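/- Let σ be a permutation of a finite set of size n and let P be the associated n×n permutation matrix over a field. Then the characteristic polynomial of P equals (x-1)^f · ∏_{ℓ} (x^ℓ - 1), where f is the number of fixed points of σ and the product runs over the lengths ℓ of the nontrivial cycles of σ (with multiplicity); equivalently, the characteristic polynomial is the product of (x^{n_j} - 1) over all the cycles C_1, …, C_t of σ, of lengths n_1, …, n_t, where cycles of length 1 correspond to fixed points. -/

import Mathlib

open Polynomial

/-!
If permutation matrices `A` and `B` come from disjoint permutations, then `(A - 1) * (B - 1) = 0`,
so `(X - A) * (X - B) = (X - 1) * (X - A * B)`. Taking determinants and cancelling powers of the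
monic polynomial `X - 1` reduces the formula to a single cycle. For a cycle `σ`, the Leibniz
expansion of `det (X - P)` involves only permutations `π` with `π i ∈ {i, σ i}` for every `i`.
Such a `π` commutes with `σ`, so it is `1` or `σ`, and just two terms survive.
-/

section Cycle

variable {ι : Type*} {σ π : Equiv.Perm ι}

theorem commute_of_forall_eq_or_eq (h : ∀ i, π i = i ∨ π i = σ i) : Commute π σ := by
  ext i
  rw [Equiv.Perm.mul_apply, Equiv.Perm.mul_apply]
  rcases h i with hi | hi
  · rw [hi]
    obtain ⟨j, hj⟩ := π.surjective (σ i)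
    rcases h j with hfix | hmove
    · have hji : j = σ i := hfix.symm.trans hj
      rwa [hji] at hfix
    · have hji : j = i := σ.injective (hmove.symm.trans hj)
      have hσi : σ i = i := by rw [← hj, hji, hi]
      rw [hσi, hi]
  · rw [hi]
    rcases h (σ i) with hfix | hmove
    · have hσi : σ i = i := π.injective (hfix.trans hi.symm)
      rw [hfix, hσi, hσi]
    · exact hmove

theorem apply_eq_of_commute_of_sameCycle {τ : Equiv.Perm ι} (hπ : Commute π σ) (hτ : Commute τ σ)
    {i j : ι} (hij : σ.SameCycle i j) (hi : π i = τ i) : π j = τ j := by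
  obtain ⟨n, rfl⟩ := hij
  calc π ((σ ^ n) i) = (σ ^ n) (π i) := DFunLike.congr_fun (hπ.zpow_right n) i
    _ = (σ ^ n) (τ i) := by rw [hi]
    _ = τ ((σ ^ n) i) := (DFunLike.congr_fun (hτ.zpow_right n) i).symm

theorem eq_one_or_eq_of_isCycle (hσ : σ.IsCycle) (h : ∀ i, π i = i ∨ π i = σ i) :
    π = 1 ∨ π = σ := by
  obtain ⟨i, -, hcycle⟩ := hσ
  have hcomm : Commute π σ := commute_of_forall_eq_or_eq h
  have hfixed {j : ι} (hj : σ j = j) : π j = j := by simpa only [hj, or_self] using h j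
  refine (h i).imp (fun hi => ?_) (fun hi => ?_)
  · ext j
    by_cases hj : σ j = j
    · exact hfixed hj
    · exact apply_eq_of_commute_of_sameCycle hcomm (Commute.one_left σ) (hcycle hj) hi
  · ext j
    by_cases hj : σ j = j
    · exact (hfixed hj).trans hj.symm
    · exact apply_eq_of_commute_of_sameCycle hcomm (Commute.refl σ) (hcycle hj) hi

end Cycle

section PermMatrix

variable {R ι : Type*} [DecidableEq ι]

theorem permMatrix_apply [Zero R] [One R] (σ : Equiv.Perm ι) (i j : ι) :
    σ.permMatrix R i j = if σ i = j then 1 else 0 := by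
  simp [PEquiv.toMatrix_apply, eq_comm]

theorem permMatrix_sub_one_mul_permMatrix_sub_one [Ring R] [Fintype ι] {σ τ : Equiv.Perm ι}
    (h : σ.Disjoint τ) : (σ.permMatrix R - 1) * (τ.permMatrix R - 1) = 0 := by
  ext i j
  refine Finset.sum_eq_zero fun k _ => ?_
  simp only [Matrix.sub_apply, permMatrix_apply, Matrix.one_apply]
  rcases h k with hk | hk
  · have hcol : σ i = k ↔ i = k := by
      simpa only [hk] using σ.apply_eq_iff_eq (x := i) (y := k)
    simp only [hcol, sub_self, zero_mul]
  · simp only [hk, sub_self, mul_zero]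

end PermMatrix

section Charpoly

variable {R : Type*} [CommRing R] {ι : Type*} [Fintype ι] [DecidableEq ι]

theorem det_eq_prod_add_of_isCycle {σ : Equiv.Perm ι} (hσ : σ.IsCycle) {A : Matrix ι ι R}
    (hA : ∀ i j, j ≠ i → j ≠ σ i → A i j = 0) :
    A.det = ∏ i, A i i + (σ.sign : R) * ∏ i, A i (σ i) := by
  have hvanish (π : Equiv.Perm ι) (hπ : π ∉ ({1, σ} : Finset (Equiv.Perm ι))) :
      ∏ i, A i (π i) = 0 := by
    obtain ⟨i, hi⟩ : ∃ i, ¬(π i = i ∨ π i = σ i) := by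
      by_contra! h
      exact hπ (by simpa using eq_one_or_eq_of_isCycle hσ h)
    rw [not_or] at hi
    exact Finset.prod_eq_zero (Finset.mem_univ i) (hA i (π i) hi.1 hi.2)
  calc A.det = ∑ π : Equiv.Perm ι, (π.sign : R) * ∏ i, A i (π i) := by
        simp only [← Matrix.det_transpose A, Matrix.det_apply', Matrix.transpose_apply]
    _ = ∑ π ∈ {1, σ}, (π.sign : R) * ∏ i, A i (π i) :=
        (Finset.sum_subset (Finset.subset_univ _) fun π _ hπ => by
          rw [hvanish π hπ, mul_zero]).symm
    _ = ∏ i, A i i + (σ.sign : R) * ∏ i, A i (σ i) := by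
        rw [Finset.sum_pair hσ.ne_one.symm]
        simp

theorem charmatrix_mul_charmatrix {A B : Matrix ι ι R} (h : (A - 1) * (B - 1) = 0) :
    A.charmatrix * B.charmatrix = (X - 1 : R[X]) • (A * B).charmatrix := by
  have hmul : A * B = A + B - 1 := by
    rw [← sub_eq_zero, ← h]
    noncomm_ring
  have hmulC := congrArg (C : R →+* R[X]).mapMatrix hmul
  simp only [map_mul, map_sub, map_add, map_one] at hmulC
  simp only [Matrix.charmatrix, map_mul, Matrix.scalar_apply, ← Matrix.smul_one_eq_diagonal,
    sub_mul, mul_sub, smul_mul_assoc, mul_smul_comm, one_mul, mul_one, hmulC]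
  module

theorem charpoly_mul_charpoly {A B : Matrix ι ι R} (h : (A - 1) * (B - 1) = 0) :
    A.charpoly * B.charpoly = (X - 1) ^ Fintype.card ι * (A * B).charpoly := by
  simp only [Matrix.charpoly]
  rw [← Matrix.det_mul, charmatrix_mul_charmatrix h, Matrix.det_smul]

theorem charpoly_permMatrix_mul_charpoly_permMatrix {σ τ : Equiv.Perm ι} (h : σ.Disjoint τ) :
    (σ.permMatrix R).charpoly * (τ.permMatrix R).charpoly =
      (X - 1) ^ Fintype.card ι * ((σ * τ).permMatrix R).charpoly := by
  rw [charpoly_mul_charpoly (permMatrix_sub_one_mul_permMatrix_sub_one h),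
    ← Matrix.permMatrix_mul, h.commute.eq]

theorem charmatrix_permMatrix_apply (σ : Equiv.Perm ι) (i j : ι) :
    (σ.permMatrix R).charmatrix i j =
      (if i = j then X else 0) - if σ i = j then 1 else 0 := by
  rw [Matrix.charmatrix_apply, Matrix.diagonal_apply, permMatrix_apply, apply_ite C, C_1, C_0]

theorem charpoly_permMatrix_of_isCycle {σ : Equiv.Perm ι} (hσ : σ.IsCycle) :
    (σ.permMatrix R).charpoly = (X - 1) ^ σ.supportᶜ.card * (X ^ σ.support.card - 1) := by
  have hprod (p : R[X]) : (∏ i, if σ i = i then X - 1 else p) =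
      (X - 1) ^ σ.supportᶜ.card * p ^ σ.support.card := by
    simp [Finset.prod_ite, Equiv.Perm.support, Finset.compl_filter]
  have hdiag : ∏ i, (σ.permMatrix R).charmatrix i i =
      (X - 1) ^ σ.supportᶜ.card * X ^ σ.support.card := by
    rw [← hprod]
    refine Finset.prod_congr rfl fun i _ => ?_
    by_cases hi : σ i = i <;>
      simp only [charmatrix_permMatrix_apply, hi, if_true, if_false, sub_zero]
  have hcycle : ∏ i, (σ.permMatrix R).charmatrix i (σ i) =
      (X - 1) ^ σ.supportᶜ.card * (-1) ^ σ.support.card := by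
    rw [← hprod]
    refine Finset.prod_congr rfl fun i _ => ?_
    by_cases hi : σ i = i <;>
      simp only [charmatrix_permMatrix_apply, hi, eq_comm (a := i), if_true, if_false, zero_sub]
  have hsign : (σ.sign : R[X]) * (-1) ^ σ.support.card = -1 := by
    simp [hσ.sign, ← mul_pow]
  rw [Matrix.charpoly, det_eq_prod_add_of_isCycle hσ, hdiag, hcycle, mul_left_comm, hsign]
  · ring
  · intro i j hji hjσ
    rw [charmatrix_permMatrix_apply, if_neg hji.symm, if_neg hjσ.symm, sub_zero]

theorem card_compl_support_mul_add_card {σ τ : Equiv.Perm ι} (h : σ.Disjoint τ) :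
    (σ * τ).supportᶜ.card + Fintype.card ι = σ.supportᶜ.card + τ.supportᶜ.card := by
  have hσ := σ.support.card_compl_add_card
  have hτ := τ.support.card_compl_add_card
  have hστ := (σ * τ).support.card_compl_add_card
  rw [h.card_support_mul] at hστ
  lia

theorem charpoly_permMatrix (σ : Equiv.Perm ι) :
    (σ.permMatrix R).charpoly =
      (X - 1) ^ σ.supportᶜ.card * (σ.cycleType.map fun ℓ => (X : R[X]) ^ ℓ - 1).prod := by
  induction σ using Equiv.Perm.cycle_induction_on with
  | base_one => simp [Matrix.charpoly_one]
  | base_cycles σ hσ => simp [charpoly_permMatrix_of_isCycle hσ, hσ.cycleType]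
  | induction_disjoint σ τ h _ hσ hτ =>
    have hmonic : ((X - 1 : R[X]) ^ Fintype.card ι).Monic := (monic_X_sub_C 1).pow _
    apply hmonic.isRegular.left
    simp only [← charpoly_permMatrix_mul_charpoly_permMatrix h, hσ, hτ, h.cycleType_mul,
      Multiset.map_add, Multiset.prod_add]
    rw [mul_mul_mul_comm, ← pow_add, ← card_compl_support_mul_add_card h]
    ring

theorem stmt_9_general (σ : Equiv.Perm ι) (P : Matrix ι ι R)
    (hP : ∀ i j, P i j = if σ j = i then 1 else 0) :
    P.charpoly =
      (X - 1) ^ (Finset.univ.filter fun i => σ i = i).card *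
        (σ.cycleType.map fun ℓ => (X : R[X]) ^ ℓ - 1).prod := by
  have hperm : P = (σ.permMatrix R).transpose := by
    ext i j
    rw [hP, Matrix.transpose_apply, permMatrix_apply]
  have hfixed : σ.supportᶜ = Finset.univ.filter fun i => σ i = i := by
    ext i
    simp
  rw [hperm, Matrix.charpoly_transpose, charpoly_permMatrix, hfixed]

end Charpoly

/-- The characteristic polynomial of the permutation matrix of a permutation `σ`
of a finite set of size `n` is `(X - 1)^f * ∏_ℓ (X^ℓ - 1)`, where `f` is the number
of fixed points of `σ` and the product runs over the lengths of the nontrivial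
cycles of `σ` (with multiplicity, recorded by `σ.cycleType`). -/
theorem stmt_9 {F : Type*} [Field F] {ι : Type*} [Fintype ι] [DecidableEq ι]
    (σ : Equiv.Perm ι) (P : Matrix ι ι F)
    (hP : ∀ i j, P i j = if σ j = i then 1 else 0) :
    P.charpoly =
      (Polynomial.X - 1) ^ ((Finset.univ.filter fun i => σ i = i).card) *
        (σ.cycleType.map fun ℓ => (Polynomial.X : F[X]) ^ ℓ - 1).prod :=
  stmt_9_general σ P hP
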